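/- arXiv:math/0505153 — 3 statements merged into one kernel-verified Lean document; each statement's English description precedes it below -/
import Mathlib

section
/- Let m ∈ ℝ and σ > 0. The pushforward of the Gaussian measure N(m, σ²) under the absolute value map equals the countable mixture Σ_{i=0}^{∞} α_i(m, σ) ν^{i,(1)}_σ, where α_i(m, σ) = exp(−m²/(2σ²)) (m²/(2σ²))^i / i! (so that α_i(m,σ) ≥ 0 and Σ_i α_i(m,σ) = 1), and ν^{i,(1)}_σ is the probability measure on (0, ∞) with Lebesgue density x ↦ 1_{(x>0)} (2/(σ√(2π))) (x/σ)^{2i}/C_{2i} · exp(−x²/(2σ²)), with C_{2i} = (2i)!/(2^i i!). -/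
open MeasureTheory ProbabilityTheory

/-- The even Gaussian moments `C_{2i} = (2i)!/(2ⁱ i!)`. -/
noncomputable def gaussEvenMoment (i : ℕ) : ℝ :=
  (Nat.factorial (2 * i)) / (2 ^ i * Nat.factorial i)

/-- The probability measure `ν^{i,(1)}_σ` on `(0,∞)` with Lebesgue density
`x ↦ 1_{(x>0)} (2/(σ√(2π))) (x/σ)^{2i}/C_{2i} exp(−x²/(2σ²))`. -/
noncomputable def nuRadial1 (i : ℕ) (σ : ℝ) : Measure ℝ :=
  volume.withDensity (fun x => ENNReal.ofReal
    (if 0 < x then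
      2 / (σ * Real.sqrt (2 * Real.pi)) * (x / σ) ^ (2 * i) / gaussEvenMoment i
        * Real.exp (-x ^ 2 / (2 * σ ^ 2))
    else 0))

/-- The mixture coefficients `α_i(m,σ) = exp(−m²/(2σ²)) (m²/(2σ²))^i / i!`. -/
noncomputable def absGaussCoeff (m σ : ℝ) (i : ℕ) : ℝ :=
  Real.exp (-m ^ 2 / (2 * σ ^ 2)) * (m ^ 2 / (2 * σ ^ 2)) ^ i / Nat.factorial i

lemma aux_nonneg (m σ : ℝ) (i : ℕ) : 0 ≤ absGaussCoeff m σ i := by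
  unfold absGaussCoeff
  positivity

lemma aux_tsum (m σ : ℝ) : (∑' i, absGaussCoeff m σ i) = 1 := by
  have h : HasSum (fun i : ℕ => (m ^ 2 / (2 * σ ^ 2)) ^ i / (Nat.factorial i : ℝ))
      (Real.exp (m ^ 2 / (2 * σ ^ 2))) := by
    rw [Real.exp_eq_exp_ℝ]
    exact NormedSpace.expSeries_div_hasSum_exp _
  have h2 := (h.mul_left (Real.exp (-m ^ 2 / (2 * σ ^ 2)))).tsum_eq
  rw [← Real.exp_add, neg_div, neg_add_cancel, Real.exp_zero] at h2
  rw [← h2]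
  refine tsum_congr fun i => ?_
  unfold absGaussCoeff
  rw [mul_div_assoc, neg_div]

lemma aux_transfer {f g : ℕ → ℝ} {a b : ℝ} (h : HasSum g b) (hf : ∀ i, f i = g i)
    (hab : a = b) : HasSum f a := by
  have : f = g := funext hf
  subst this hab
  exact h

lemma aux_hasSum (m σ x : ℝ) (hσ : 0 < σ) :
    HasSum (fun i => absGaussCoeff m σ i *
      (2 / (σ * Real.sqrt (2 * Real.pi)) * (x / σ) ^ (2 * i) / gaussEvenMoment i
        * Real.exp (-x ^ 2 / (2 * σ ^ 2))))
      (gaussianPDFReal m (Real.toNNReal (σ ^ 2)) x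
        + gaussianPDFReal m (Real.toNNReal (σ ^ 2)) (-x)) := by
  have h := (Real.hasSum_cosh (m * x / σ ^ 2)).mul_left
    (2 / (σ * Real.sqrt (2 * Real.pi)) *
      (Real.exp (-m ^ 2 / (2 * σ ^ 2)) * Real.exp (-x ^ 2 / (2 * σ ^ 2))))
  have hs : Real.sqrt (2 * Real.pi) ≠ 0 := by positivity
  refine aux_transfer h ?_ ?_
  · intro i
    unfold absGaussCoeff gaussEvenMoment
    have h1 : (Nat.factorial i : ℝ) ≠ 0 := by positivity
    have h2 : (Nat.factorial (2 * i) : ℝ) ≠ 0 := by positivity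
    have h3 : (m * x / σ ^ 2) ^ (2 * i)
        = (m ^ 2 / (2 * σ ^ 2)) ^ i * (x / σ) ^ (2 * i) * 2 ^ i := by
      rw [pow_mul, pow_mul, ← mul_pow, ← mul_pow]
      congr 1
      field_simp
    rw [h3]
    field_simp
  · have hv : ((Real.toNNReal (σ ^ 2) : NNReal) : ℝ) = σ ^ 2 :=
      Real.coe_toNNReal _ (by positivity)
    have hsq : Real.sqrt (2 * Real.pi * σ ^ 2) = σ * Real.sqrt (2 * Real.pi) := by
      rw [Real.sqrt_mul (by positivity), Real.sqrt_sq hσ.le, mul_comm]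
    rw [gaussianPDFReal, gaussianPDFReal, hv, hsq, Real.cosh_eq]
    have e1 : Real.exp (-(x - m) ^ 2 / (2 * σ ^ 2)) = Real.exp (-m ^ 2 / (2 * σ ^ 2)) *
        Real.exp (-x ^ 2 / (2 * σ ^ 2)) * Real.exp (m * x / σ ^ 2) := by
      rw [← Real.exp_add, ← Real.exp_add]
      congr 1
      field_simp
      ring
    have e2 : Real.exp (-(-x - m) ^ 2 / (2 * σ ^ 2)) = Real.exp (-m ^ 2 / (2 * σ ^ 2)) *
        Real.exp (-x ^ 2 / (2 * σ ^ 2)) * Real.exp (-(m * x / σ ^ 2)) := by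
      rw [← Real.exp_add, ← Real.exp_add]
      congr 1
      field_simp
      ring
    rw [e1, e2]
    field_simp

lemma aux_fold (g : ℝ → ENNReal) (hg : Measurable g) :
    ∫⁻ x, g x = ∫⁻ x, (Set.Ioi (0 : ℝ)).indicator (fun x => g x + g (-x)) x := by
  have h1 : ∫⁻ x in Set.Iic (0 : ℝ), g x = ∫⁻ x in Set.Ioi (0 : ℝ), g (-x) := by
    rw [← setLIntegral_congr (Iio_ae_eq_Iic (μ := volume) (a := (0 : ℝ))),
      ← lintegral_indicator measurableSet_Iio, ← lintegral_indicator measurableSet_Ioi,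
      ← (Measure.measurePreserving_neg (volume : Measure ℝ)).lintegral_comp
        (hg.indicator measurableSet_Iio)]
    refine lintegral_congr fun x => ?_
    simp [Set.indicator_apply]
  rw [lintegral_indicator measurableSet_Ioi, lintegral_add_left hg, ← h1,
    ← lintegral_add_compl g measurableSet_Ioi, Set.compl_Ioi]

/-- The law of `|X|` for `X ∼ N(m, σ²)` is the countable mixture
`∑ᵢ αᵢ(m,σ) ν^{i,(1)}_σ`, where the coefficients `αᵢ(m,σ)` are nonnegative
and sum to `1`. -/
theorem abs_gaussian_as_mixture (m σ : ℝ) (hσ : 0 < σ) :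
    Measure.map (fun t => |t|) (gaussianReal m (Real.toNNReal (σ ^ 2)))
      = Measure.sum (fun i => ENNReal.ofReal (absGaussCoeff m σ i) • nuRadial1 i σ) ∧
    (∀ i, 0 ≤ absGaussCoeff m σ i) ∧
    (∑' i, absGaussCoeff m σ i) = 1 := by
  refine ⟨?_, aux_nonneg m σ, aux_tsum m σ⟩
  have hv : Real.toNNReal (σ ^ 2) ≠ 0 := by
    have : 0 < σ ^ 2 := by positivity
    simpa using hσ.ne'
  ext s hs
  have habs : Measurable (fun t : ℝ => |t|) := measurable_norm
  rw [Measure.map_apply habs hs, gaussianReal_apply _ hv, Measure.sum_apply _ hs,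
    ← lintegral_indicator (habs hs),
    aux_fold _ ((measurable_gaussianPDF _ _).indicator (habs hs))]
  have hm : ∀ i : ℕ, Measurable (fun x : ℝ => ENNReal.ofReal
    (if 0 < x then
      2 / (σ * Real.sqrt (2 * Real.pi)) * (x / σ) ^ (2 * i) / gaussEvenMoment i
        * Real.exp (-x ^ 2 / (2 * σ ^ 2))
    else 0)) := fun i =>
    (Measurable.ite measurableSet_Ioi (by fun_prop) (by fun_prop)).ennreal_ofReal
  simp only [Measure.smul_apply, smul_eq_mul, nuRadial1, withDensity_apply _ hs]
  simp_rw [← lintegral_const_mul _ (hm _)]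
  rw [← lintegral_tsum (fun i => ((hm i).const_mul _).aemeasurable), ← lintegral_indicator hs]
  refine lintegral_congr fun x => ?_
  by_cases hx : 0 < x
  · by_cases hxs : x ∈ s
    · have hS := aux_hasSum m σ x hσ
      have m1 : x ∈ (fun t : ℝ => |t|) ⁻¹' s := by simpa [abs_of_pos hx] using hxs
      have m2 : -x ∈ (fun t : ℝ => |t|) ⁻¹' s := by simpa [abs_of_pos hx] using hxs
      rw [Set.indicator_of_mem (Set.mem_Ioi.2 hx), Set.indicator_of_mem m1,
        Set.indicator_of_mem m2, Set.indicator_of_mem hxs]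
      simp only [hx, if_true, gaussianPDF]
      rw [← ENNReal.ofReal_add (gaussianPDFReal_nonneg _ _ _) (gaussianPDFReal_nonneg _ _ _),
        ← hS.tsum_eq, ENNReal.ofReal_tsum_of_nonneg _ hS.summable]
      · exact tsum_congr fun i => ENNReal.ofReal_mul (aux_nonneg m σ i)
      · intro i
        have := aux_nonneg m σ i
        unfold gaussEvenMoment
        positivity
    · simp [hx, abs_of_pos hx, hxs]
  · by_cases hxs : x ∈ s
    · simp [hx, hxs]
    · simp [hx, hxs]
end

section
/- Let δ ≥ 1 be real, a ∈ ℝ, β > 0, σ > 0, i ∈ ℕ and x' > 0. Define g_k^{(δ)}(u) = 1_{(u>0)} (2/√(2π)) u^{δ−1+2k}/C_{δ−1+2k} · e^{−u²/2} (where C_α = ∫_ℝ |v|^α (2π)^{−1/2} e^{−v²/2} dv), and define the kernel p^{(δ)}(x, x') = 1_{(x'>0)} (2/(β√(2π))) e^{−x'²/(2β²)} Σ_{k=0}^{∞} α_k(x) x'^{δ−1+2k}/(C_{δ−1+2k} β^{δ−1+2k}), with α_k(x) = e^{−a²x²/(2β²)} (a²x²/(2β²))^k / k!. Set τ² = β²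 + a²σ². Then ∫_0^∞ (1/σ) g_i^{(δ)}(x/σ) · p^{(δ)}(x, x') dx = Σ_{k=0}^{i} binom(i,k) (1 − β²/τ²)^k (β²/τ²)^{i−k} · (1/τ) g_k^{(δ)}(x'/τ). -/
open MeasureTheory

/-- `C_α = ∫ |v|^α (2π)^{−1/2} e^{−v²/2} dv`, the `α`-th absolute moment of a
standard Gaussian. -/
noncomputable def gaussAbsMoment (α : ℝ) : ℝ :=
  ∫ v : ℝ, |v| ^ α * (Real.sqrt (2 * Real.pi))⁻¹ * Real.exp (-v ^ 2 / 2)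

/-- The density `g_k^{(δ)}(u) = 1_{(u>0)} (2/√(2π)) u^{δ−1+2k}/C_{δ−1+2k} e^{−u²/2}`. -/
noncomputable def gRadial (δ : ℝ) (k : ℕ) (u : ℝ) : ℝ :=
  if 0 < u then
    2 / Real.sqrt (2 * Real.pi) * u ^ (δ - 1 + 2 * (k : ℝ))
      / gaussAbsMoment (δ - 1 + 2 * (k : ℝ)) * Real.exp (-u ^ 2 / 2)
  else 0

/-- The transition density of the sampled `δ`-dimensional radial
Ornstein–Uhlenbeck process,
`p^{(δ)}(x,x') = 1_{(x'>0)} (2/(β√(2π))) e^{−x'²/(2β²)}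
  ∑ₖ α_k(x) x'^{δ−1+2k}/(C_{δ−1+2k} β^{δ−1+2k})` with
`α_k(x) = e^{−a²x²/(2β²)} (a²x²/(2β²))^k/k!`. -/
noncomputable def radialOUKernel (δ a β : ℝ) (x x' : ℝ) : ℝ :=
  if 0 < x' then
    2 / (β * Real.sqrt (2 * Real.pi)) * Real.exp (-x' ^ 2 / (2 * β ^ 2))
      * ∑' k : ℕ,
          (Real.exp (-(a ^ 2 * x ^ 2) / (2 * β ^ 2))
              * (a ^ 2 * x ^ 2 / (2 * β ^ 2)) ^ k / Nat.factorial k)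
            * x' ^ (δ - 1 + 2 * (k : ℝ))
            / (gaussAbsMoment (δ - 1 + 2 * (k : ℝ)) * β ^ (δ - 1 + 2 * (k : ℝ)))
  else 0

theorem hasSum_transfer {f g : ℕ → ℝ} {u v : ℝ} (h : HasSum g v) (hf : ∀ n, f n = g n)
    (huv : u = v) : HasSum f u := by
  have : f = g := funext hf
  rw [this, huv]
  exact h

theorem kummer (z : ℝ) (i : ℕ) : ∀ s : ℝ, 0 < s →
    HasSum (fun n : ℕ => Real.Gamma (s + i + n) / Real.Gamma (s + n) * (z ^ n / n.factorial))
      (Real.exp z * ∑ k ∈ Finset.range (i + 1),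
        (Nat.choose i k : ℝ) * z ^ k * (Real.Gamma (s + i) / Real.Gamma (s + k))) := by
  induction i with
  | zero =>
    intro s hs
    have h : HasSum (fun n : ℕ => z ^ n / (n.factorial : ℝ)) (Real.exp z) := by
      rw [Real.exp_eq_exp_ℝ]
      exact NormedSpace.expSeries_div_hasSum_exp z
    have h0 : Real.Gamma s ≠ 0 := (Real.Gamma_pos_of_pos hs).ne'
    convert h using 2 with n
    · have : Real.Gamma (s + n) ≠ 0 := (Real.Gamma_pos_of_pos (by positivity)).ne'
      simp [this]
    · simp [h0]
  | succ i ih =>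
    intro s hs
    have h1 := (ih s hs).mul_left (s + i)
    have h2 := (ih (s + 1) (by positivity)).mul_left z
    have h3 : HasSum (fun n : ℕ => (n : ℝ) * (Real.Gamma (s + i + n) / Real.Gamma (s + n)
        * (z ^ n / n.factorial))) (z * (Real.exp z * ∑ k ∈ Finset.range (i + 1),
        (Nat.choose i k : ℝ) * z ^ k * (Real.Gamma (s + 1 + i) / Real.Gamma (s + 1 + k)))) := by
      rw [← hasSum_nat_add_iff' 1]
      refine hasSum_transfer h2 ?_ ?_
      · intro n
        have e1 : s + i + ((n + 1 : ℕ) : ℝ) = s + 1 + i + n := by push_cast; ring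
        have e2 : s + ((n + 1 : ℕ) : ℝ) = s + 1 + n := by push_cast; ring
        rw [e1, e2, Nat.factorial_succ, pow_succ]
        have : (n.factorial : ℝ) ≠ 0 := by positivity
        have : ((n : ℝ) + 1) ≠ 0 := by positivity
        push_cast
        field_simp
      · simp
    refine hasSum_transfer (h1.add h3) ?_ ?_
    · intro n
      have e : s + ((i + 1 : ℕ) : ℝ) + n = (s + i + n) + 1 := by push_cast; ring
      rw [e, Real.Gamma_add_one (by positivity)]
      ring
    · rw [mul_left_comm (s + i), mul_left_comm z, ← mul_add]
      congr 1
      have e : s + ((i + 1 : ℕ) : ℝ) = (s + i) + 1 := by push_cast; ring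
      rw [e, Finset.sum_range_succ', Finset.mul_sum, Finset.mul_sum]
      have e' : s + 1 + (i : ℝ) = (s + i) + 1 := by ring
      have hG := Real.Gamma_add_one (s := s + i) (by positivity)
      have A : ∑ k ∈ Finset.range (i + 1), (s + i) * ((i.choose k : ℝ) * z ^ k *
          (Real.Gamma (s + i) / Real.Gamma (s + k)))
          = ∑ k ∈ Finset.range (i + 1 + 1), ((i.choose k : ℝ) * z ^ k *
          (Real.Gamma (s + i + 1) / Real.Gamma (s + k))) := by
        rw [Finset.sum_range_succ _ (i + 1), Nat.choose_succ_self, hG]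
        simp only [Nat.cast_zero, zero_mul, add_zero]
        refine Finset.sum_congr rfl fun k _ => by ring
      rw [A, Finset.sum_range_succ' _ (i + 1), add_right_comm (∑ k ∈ _, _) _ (∑ k ∈ _, _), ← Finset.sum_add_distrib]
      congr 1
      · refine Finset.sum_congr rfl fun k _ => ?_
        have e2 : s + ((k + 1 : ℕ) : ℝ) = s + 1 + k := by push_cast; ring
        rw [e2, e', Nat.choose_succ_succ]
        push_cast
        ring
      · simp

theorem gaussAbsMoment_eq (δ : ℝ) (hδ : 1 ≤ δ) (k : ℕ) :
    2 / Real.sqrt (2 * Real.pi) / gaussAbsMoment (δ - 1 + 2 * (k : ℝ))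
      = 2 * (2 : ℝ) ^ (-(δ / 2)) * (1 / 2) ^ k / Real.Gamma (δ / 2 + k) := by
  have hk : (0 : ℝ) ≤ k := by positivity
  have h1 : gaussAbsMoment (δ - 1 + 2 * (k : ℝ)) = 2 * ((Real.sqrt (2 * Real.pi))⁻¹ *
      ((1 / 2 : ℝ) ^ (-(δ / 2 + k)) * (1 / 2) * Real.Gamma (δ / 2 + k))) := by
    unfold gaussAbsMoment
    have := integral_comp_abs (f := fun v : ℝ => v ^ (δ - 1 + 2 * (k : ℝ)) *
      (Real.sqrt (2 * Real.pi))⁻¹ * Real.exp (-v ^ 2 / 2))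
    simp only [sq_abs] at this
    rw [this]
    congr 1
    have h := integral_rpow_mul_exp_neg_mul_rpow (p := 2) (q := δ - 1 + 2 * (k : ℝ)) (b := 1 / 2)
      (by norm_num) (by linarith) (by norm_num)
    have e : (δ - 1 + 2 * (k : ℝ) + 1) / 2 = δ / 2 + k := by ring
    have e' : -(δ - 1 + 2 * (k : ℝ) + 1) / 2 = -(δ / 2 + k) := by ring
    rw [e, e'] at h
    rw [← h, ← integral_const_mul]
    refine integral_congr_ae (Filter.Eventually.of_forall fun x => ?_)
    simp only [Real.rpow_two]
    rw [show -x ^ 2 / 2 = -(1 / 2) * x ^ 2 by ring]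
    ring
  have hG : 0 < Real.Gamma (δ / 2 + k) := Real.Gamma_pos_of_pos (by positivity)
  have hp : (1 / 2 : ℝ) ^ (-(δ / 2 + k)) = ((2 : ℝ) ^ (-(δ / 2)) * (1 / 2) ^ k)⁻¹ := by
    rw [one_div, Real.inv_rpow (by norm_num), neg_add, Real.rpow_add (by norm_num),
      Real.rpow_neg (y := (k : ℝ)) (by norm_num), Real.rpow_natCast, inv_pow]
  have hs : 0 < Real.sqrt (2 * Real.pi) := by positivity
  have h2 : (0 : ℝ) < (2 : ℝ) ^ (-(δ / 2)) := by positivity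
  rw [h1, hp]
  field_simp

theorem gRadial_eq (δ : ℝ) (hδ : 1 ≤ δ) (k : ℕ) (u : ℝ) (hu : 0 < u) :
    gRadial δ k u = 2 * (2 : ℝ) ^ (-(δ / 2)) * u ^ (δ - 1) * (u ^ 2 / 2) ^ k
      / Real.Gamma (δ / 2 + k) * Real.exp (-u ^ 2 / 2) := by
  unfold gRadial
  rw [if_pos hu, mul_div_right_comm, gaussAbsMoment_eq δ hδ, Real.rpow_add hu,
    show 2 * (k : ℝ) = ((2 * k : ℕ) : ℝ) by push_cast; ring, Real.rpow_natCast, pow_mul,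
    div_pow, div_pow, one_pow]
  ring

theorem kernel_eq (δ a β x x' : ℝ) (hβ : 0 < β) (hx' : 0 < x') :
    radialOUKernel δ a β x x' = ∑' k : ℕ, (Real.exp (-(a ^ 2 * x ^ 2) / (2 * β ^ 2))
              * (a ^ 2 * x ^ 2 / (2 * β ^ 2)) ^ k / Nat.factorial k)
            * (1 / β * gRadial δ k (x' / β)) := by
  unfold radialOUKernel gRadial
  rw [if_pos hx', ← tsum_mul_left]
  refine tsum_congr fun k => ?_
  rw [if_pos (by positivity), Real.div_rpow hx'.le hβ.le,
    show -(x' / β) ^ 2 / 2 = -x' ^ 2 / (2 * β ^ 2) by field_simp]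
  simp only [div_eq_mul_inv, mul_inv]
  ring

/-- The `n`-th mixture integrand is a Gamma-type integrand. -/
theorem term_eq (δ a β σ : ℝ) (hδ : 1 ≤ δ) (hβ : 0 < β) (hσ : 0 < σ) (i n : ℕ) (x : ℝ)
    (hx : 0 < x) :
    1 / σ * gRadial δ i (x / σ) * (Real.exp (-(a ^ 2 * x ^ 2) / (2 * β ^ 2))
              * (a ^ 2 * x ^ 2 / (2 * β ^ 2)) ^ n / Nat.factorial n)
    = (2 * (2 : ℝ) ^ (-(δ / 2)) * (σ ^ 2) ^ (-(δ / 2)) * (1 / (2 * σ ^ 2)) ^ i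
        * (a ^ 2 / (2 * β ^ 2)) ^ n / Nat.factorial n / Real.Gamma (δ / 2 + i))
      * (x ^ (δ - 1 + 2 * ((i : ℝ) + n))
        * Real.exp (-((β ^ 2 + a ^ 2 * σ ^ 2) / (2 * σ ^ 2 * β ^ 2)) * x ^ 2)) := by
  rw [gRadial_eq δ hδ i _ (by positivity)]
  have e1 : x ^ (δ - 1 + 2 * ((i : ℝ) + n)) = x ^ (δ - 1) * (x ^ 2) ^ i * (x ^ 2) ^ n := by
    rw [Real.rpow_add hx, show 2 * ((i : ℝ) + n) = ((2 * (i + n) : ℕ) : ℝ) by push_cast; ring,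
      Real.rpow_natCast, pow_mul, pow_add]
    ring
  have e2 : Real.exp (-((β ^ 2 + a ^ 2 * σ ^ 2) / (2 * σ ^ 2 * β ^ 2)) * x ^ 2)
      = Real.exp (-(x / σ) ^ 2 / 2) * Real.exp (-(a ^ 2 * x ^ 2) / (2 * β ^ 2)) := by
    rw [← Real.exp_add]
    congr 1
    field_simp
    ring
  have e3 : 1 / σ * (x / σ) ^ (δ - 1) = (σ ^ 2) ^ (-(δ / 2)) * x ^ (δ - 1) := by
    rw [Real.div_rpow hx.le hσ.le, ← Real.rpow_two, ← Real.rpow_mul hσ.le,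
      show 2 * (-(δ / 2)) = -(δ - 1) + -1 by ring, Real.rpow_add hσ, Real.rpow_neg hσ.le,
      Real.rpow_neg_one]
    ring
  have e4 : ((x / σ) ^ 2 / 2) ^ i = (1 / (2 * σ ^ 2)) ^ i * (x ^ 2) ^ i := by
    rw [← mul_pow]; congr 1; field_simp
  have e5 : (a ^ 2 * x ^ 2 / (2 * β ^ 2)) ^ n = (a ^ 2 / (2 * β ^ 2)) ^ n * (x ^ 2) ^ n := by
    rw [mul_div_right_comm, mul_pow]
  rw [e1, e2, e4, e5]
  linear_combination (2 * (2 : ℝ) ^ (-(δ / 2)) * ((1 / (2 * σ ^ 2)) ^ i * (x ^ 2) ^ i)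
    / Real.Gamma (δ / 2 + i) * Real.exp (-(x / σ) ^ 2 / 2)
    * (Real.exp (-(a ^ 2 * x ^ 2) / (2 * β ^ 2)) * ((a ^ 2 / (2 * β ^ 2)) ^ n * (x ^ 2) ^ n)
      / Nat.factorial n)) * e3

theorem term_integrable (δ a β σ : ℝ) (hδ : 1 ≤ δ) (hβ : 0 < β) (hσ : 0 < σ) (i n : ℕ) :
    IntegrableOn (fun x => 1 / σ * gRadial δ i (x / σ) *
      (Real.exp (-(a ^ 2 * x ^ 2) / (2 * β ^ 2))
              * (a ^ 2 * x ^ 2 / (2 * β ^ 2)) ^ n / Nat.factorial n)) (Set.Ioi 0) := by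
  have hi : (0 : ℝ) ≤ (i : ℝ) + n := by positivity
  refine IntegrableOn.congr_fun ?_
    (fun x hx => (term_eq δ a β σ hδ hβ hσ i n x hx).symm) measurableSet_Ioi
  exact (integrableOn_rpow_mul_exp_neg_mul_sq (by positivity) (by linarith)).const_mul _

theorem term_integral (δ a β σ : ℝ) (hδ : 1 ≤ δ) (hβ : 0 < β) (hσ : 0 < σ) (i n : ℕ) :
    ∫ x in Set.Ioi (0 : ℝ), 1 / σ * gRadial δ i (x / σ) *
      (Real.exp (-(a ^ 2 * x ^ 2) / (2 * β ^ 2))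
              * (a ^ 2 * x ^ 2 / (2 * β ^ 2)) ^ n / Nat.factorial n)
    = (β ^ 2 / (β ^ 2 + a ^ 2 * σ ^ 2)) ^ (δ / 2) * (β ^ 2 / (β ^ 2 + a ^ 2 * σ ^ 2)) ^ i
      * (1 - β ^ 2 / (β ^ 2 + a ^ 2 * σ ^ 2)) ^ n / Nat.factorial n
      * (Real.Gamma (δ / 2 + i + n) / Real.Gamma (δ / 2 + i)) := by
  have hi : (0 : ℝ) ≤ (i : ℝ) + n := by positivity
  rw [setIntegral_congr_fun measurableSet_Ioi
    (fun x hx => term_eq δ a β σ hδ hβ hσ i n x hx), integral_const_mul]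
  set b := (β ^ 2 + a ^ 2 * σ ^ 2) / (2 * σ ^ 2 * β ^ 2) with hb
  have hb0 : 0 < b := by positivity
  have h := integral_rpow_mul_exp_neg_mul_rpow (p := 2) (q := δ - 1 + 2 * ((i : ℝ) + n)) (b := b)
    (by norm_num) (by linarith) hb0
  simp only [Real.rpow_two] at h
  rw [h]
  have e : (δ - 1 + 2 * ((i : ℝ) + n) + 1) / 2 = δ / 2 + i + n := by ring
  have e' : -(δ - 1 + 2 * ((i : ℝ) + n) + 1) / 2 = -(δ / 2) + -((i + n : ℕ) : ℝ) := by
    push_cast; ring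
  rw [e, e', Real.rpow_add hb0, Real.rpow_neg (y := ((i + n : ℕ) : ℝ)) hb0.le, Real.rpow_natCast]
  have f1 : (2 : ℝ) ^ (-(δ / 2)) * (σ ^ 2) ^ (-(δ / 2)) * b ^ (-(δ / 2))
      = (β ^ 2 / (β ^ 2 + a ^ 2 * σ ^ 2)) ^ (δ / 2) := by
    rw [← Real.mul_rpow (by positivity) (by positivity),
      ← Real.mul_rpow (by positivity) (by positivity), Real.rpow_neg (by positivity),
      ← Real.inv_rpow (by positivity)]
    congr 1
    rw [hb]; field_simp
  have f2 : (1 / (2 * σ ^ 2)) ^ i * (b ^ i)⁻¹ = (β ^ 2 / (β ^ 2 + a ^ 2 * σ ^ 2)) ^ i := by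
    rw [← inv_pow, ← mul_pow]
    congr 1
    rw [hb]; field_simp
  have f3 : (a ^ 2 / (2 * β ^ 2)) ^ n * (b ^ n)⁻¹
      = (1 - β ^ 2 / (β ^ 2 + a ^ 2 * σ ^ 2)) ^ n := by
    rw [← inv_pow, ← mul_pow]
    congr 1
    rw [hb]; field_simp; ring
  rw [← f1, ← f2, ← f3, pow_add, mul_inv]
  ring

/-- Prediction step: with `τ² = β² + a²σ²`,
`∫₀^∞ (1/σ) g_i^{(δ)}(x/σ) p^{(δ)}(x,x') dx
  = ∑_{k=0}^i binom(i,k)(1−β²/τ²)^k (β²/τ²)^{i−k} (1/τ) g_k^{(δ)}(x'/τ)`. -/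
theorem nuRadial_prediction (δ a β σ : ℝ) (hδ : 1 ≤ δ) (hβ : 0 < β) (hσ : 0 < σ)
    (i : ℕ) (x' : ℝ) (hx' : 0 < x') :
    ∫ x in Set.Ioi (0 : ℝ),
        (1 / σ) * gRadial δ i (x / σ) * radialOUKernel δ a β x x'
      = ∑ k ∈ Finset.range (i + 1),
          (Nat.choose i k : ℝ)
            * (1 - β ^ 2 / Real.sqrt (β ^ 2 + a ^ 2 * σ ^ 2) ^ 2) ^ k
            * (β ^ 2 / Real.sqrt (β ^ 2 + a ^ 2 * σ ^ 2) ^ 2) ^ (i - k)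
            * ((1 / Real.sqrt (β ^ 2 + a ^ 2 * σ ^ 2))
                * gRadial δ k (x' / Real.sqrt (β ^ 2 + a ^ 2 * σ ^ 2))) := by
  have hs : 0 < δ / 2 := by linarith
  have hT : 0 < β ^ 2 + a ^ 2 * σ ^ 2 := by positivity
  have hτ : 0 < Real.sqrt (β ^ 2 + a ^ 2 * σ ^ 2) := Real.sqrt_pos.mpr hT
  have hτ2 : Real.sqrt (β ^ 2 + a ^ 2 * σ ^ 2) ^ 2 = β ^ 2 + a ^ 2 * σ ^ 2 := Real.sq_sqrt hT.le
  rw [hτ2]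
  have hint := term_integrable δ a β σ hδ hβ hσ i
  have hval := term_integral δ a β σ hδ hβ hσ i
  set τ := Real.sqrt (β ^ 2 + a ^ 2 * σ ^ 2) with hτdef
  have hg0 : ∀ (k : ℕ) (u : ℝ), 0 < u → 0 ≤ gRadial δ k u := by
    intro k u hu
    have : 0 < Real.Gamma (δ / 2 + k) := Real.Gamma_pos_of_pos (by positivity)
    rw [gRadial_eq δ hδ k u hu]
    positivity
  set q := β ^ 2 / (β ^ 2 + a ^ 2 * σ ^ 2) with hq
  have hq0 : 0 < q := by positivity
  set F : ℕ → ℝ → ℝ := fun n x => 1 / σ * gRadial δ i (x / σ) *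
      (Real.exp (-(a ^ 2 * x ^ 2) / (2 * β ^ 2))
              * (a ^ 2 * x ^ 2 / (2 * β ^ 2)) ^ n / Nat.factorial n)
      * (1 / β * gRadial δ n (x' / β)) with hF
  have hFint : ∀ n, Integrable (F n) (volume.restrict (Set.Ioi 0)) :=
    fun n => (hint n).mul_const _
  set z := (1 - q) * ((x' / β) ^ 2 / 2) with hz
  set W := 2 * (2 : ℝ) ^ (-(δ / 2)) * (x' / β) ^ (δ - 1) * Real.exp (-(x' / β) ^ 2 / 2) / β
    * q ^ (δ / 2) * q ^ i / Real.Gamma (δ / 2 + i) with hW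
  have hGi : 0 < Real.Gamma (δ / 2 + i) := Real.Gamma_pos_of_pos (by positivity)
  have hFval : ∀ n, ∫ x in Set.Ioi (0 : ℝ), F n x
      = W * (Real.Gamma (δ / 2 + i + n) / Real.Gamma (δ / 2 + n) * (z ^ n / n.factorial)) := by
    intro n
    rw [hF]
    simp only
    rw [integral_mul_const, hval n, gRadial_eq δ hδ n _ (by positivity), hW, hz, mul_pow]
    ring
  have hsum := (kummer z i (δ / 2) hs).mul_left W
  have hnorm : ∀ n, ∫ x in Set.Ioi (0 : ℝ), ‖F n x‖ = ∫ x in Set.Ioi (0 : ℝ), F n x := by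
    intro n
    refine setIntegral_congr_fun measurableSet_Ioi fun x hx => ?_
    have hx : 0 < x := hx
    have h1 := hg0 i (x / σ) (by positivity)
    have h2 := hg0 n (x' / β) (by positivity)
    rw [Real.norm_eq_abs, abs_of_nonneg]
    rw [hF]
    positivity
  have key := hasSum_integral_of_summable_integral_norm hFint
    (by simp only [hnorm, hFval]; exact hsum.summable)
  simp only [hFval] at key
  have hL : ∫ x in Set.Ioi (0 : ℝ), 1 / σ * gRadial δ i (x / σ) * radialOUKernel δ a β x x'
      = ∫ x in Set.Ioi (0 : ℝ), ∑' n, F n x := by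
    congr 1
    ext x
    rw [kernel_eq δ a β x x' hβ hx', ← tsum_mul_left]
    refine tsum_congr fun n => ?_
    rw [hF]; ring
  rw [hL, key.unique hsum, Finset.mul_sum, Finset.mul_sum]
  refine Finset.sum_congr rfl fun k hk => ?_
  have hki : k ≤ i := Nat.lt_succ_iff.mp (Finset.mem_range.mp hk)
  rw [gRadial_eq δ hδ k _ (by positivity)]
  have hqτ : q = (β / τ) ^ 2 := by rw [hq, div_pow, hτ2]
  have g1 : (x' / τ) ^ 2 = q * (x' / β) ^ 2 := by
    rw [hqτ]; field_simp
  have g2 : 1 / τ * (x' / τ) ^ (δ - 1) = q ^ (δ / 2) * ((x' / β) ^ (δ - 1) / β) := by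
    have : x' / τ = (β / τ) * (x' / β) := by field_simp
    rw [this, Real.mul_rpow (by positivity) (by positivity), hqτ, ← Real.rpow_two,
      ← Real.rpow_mul (by positivity), show 2 * (δ / 2) = (δ - 1) + 1 by ring,
      Real.rpow_add (by positivity), Real.rpow_one]
    field_simp
  have g3 : Real.exp (-(x' / τ) ^ 2 / 2) = Real.exp (-(x' / β) ^ 2 / 2) * Real.exp z := by
    rw [← Real.exp_add, g1, hz]; congr 1; ring
  have g4 : (1 - q) ^ k * q ^ (i - k) * ((x' / τ) ^ 2 / 2) ^ k = q ^ i * z ^ k := by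
    have : q ^ i = q ^ (i - k) * q ^ k := by rw [← pow_add, Nat.sub_add_cancel hki]
    rw [g1, hz, this, mul_div_assoc, mul_pow, mul_pow]
    ring
  calc _ = (i.choose k : ℝ) * (q ^ i * z ^ k) * (2 * (2 : ℝ) ^ (-(δ / 2)))
        * (q ^ (δ / 2) * ((x' / β) ^ (δ - 1) / β))
        * (Real.exp (-(x' / β) ^ 2 / 2) * Real.exp z) / Real.Gamma (δ / 2 + k) := by
        rw [hW]; field_simp
    _ = _ := by rw [← g4, ← g2, ← g3]; ring
end

section
/- Let δ ≥ 1 be real, 0 < a < 1, β > 0, and set ρ² = β²/(1 − a²). Define π^{(δ)}(x) = 1_{(x>0)} (2/(ρ√(2π))) e^{−x²/(2ρ²)} x^{δ−1}/(ρ^{δ−1} C_{δ−1}), and define the transition density p^{(δ)}(x, x') = 1_{(x'>0)} (2/(β√(2π))) e^{−x'²/(2β²)} Σ_{k=0}^{∞} α_k(x) x'^{δ−1+2k}/(C_{δ−1+2k} β^{δ−1+2k}), with α_k(x) = e^{−a²x²/(2β²)} (a²x²/(2β²))^k/k!, where C_α = ∫_ℝ |v|^α (2π)^{−1/2} e^{−v²/2}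 dv. Then π^{(δ)} is a stationary density for p^{(δ)}: for every x' > 0, ∫_0^∞ π^{(δ)}(x) p^{(δ)}(x, x') dx = π^{(δ)}(x'). -/
open MeasureTheory

/-- The stationary density of the sampled radial Ornstein–Uhlenbeck process,
`π^{(δ)}(x) = 1_{(x>0)} (2/(ρ√(2π))) e^{−x²/(2ρ²)} x^{δ−1}/(ρ^{δ−1} C_{δ−1})`. -/
noncomputable def radialOUStationary (δ ρ : ℝ) (x : ℝ) : ℝ :=
  if 0 < x then
    2 / (ρ * Real.sqrt (2 * Real.pi)) * Real.exp (-x ^ 2 / (2 * ρ ^ 2))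
      * x ^ (δ - 1) / (ρ ^ (δ - 1) * gaussAbsMoment (δ - 1))
  else 0


lemma gaussAbsMoment_eq_Ioi (q : ℝ) :
    gaussAbsMoment q = 2 * (Real.sqrt (2 * Real.pi))⁻¹
      * ∫ x in Set.Ioi (0 : ℝ), x ^ q * Real.exp (-(1 / 2) * x ^ (2 : ℝ)) := by
  have h := integral_comp_abs
    (f := fun v : ℝ => v ^ q * (Real.sqrt (2 * Real.pi))⁻¹ * Real.exp (-v ^ 2 / 2))
  simp only [sq_abs] at h
  rw [gaussAbsMoment, h, mul_assoc, ← integral_const_mul (Real.sqrt (2 * Real.pi))⁻¹]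
  congr 1
  refine setIntegral_congr_fun measurableSet_Ioi fun x _ => ?_
  simp only [Real.rpow_two]
  rw [show -x ^ 2 / 2 = -(1 / 2) * x ^ 2 by ring]
  ring

lemma gaussAbsMoment_pos' {q : ℝ} (hq : 0 ≤ q) : 0 < gaussAbsMoment q := by
  rw [gaussAbsMoment_eq_Ioi,
    integral_rpow_mul_exp_neg_mul_rpow two_pos (by linarith) (by norm_num)]
  have : 0 < Real.Gamma ((q + 1) / 2) := Real.Gamma_pos_of_pos (by linarith)
  positivity

lemma integral_Ioi_eq_moment {q β : ℝ} (hq : 0 ≤ q) (hβ : 0 < β) :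
    ∫ x in Set.Ioi (0 : ℝ), x ^ q * Real.exp (-(1 / (2 * β ^ 2)) * x ^ 2)
      = β * β ^ q * (Real.sqrt (2 * Real.pi) / 2) * gaussAbsMoment q := by
  have hs : 0 < Real.sqrt (2 * Real.pi) := by positivity
  have h := integral_rpow_mul_exp_neg_mul_rpow (p := 2) (q := q) (b := 1 / (2 * β ^ 2)) two_pos
    (by linarith) (by positivity)
  simp only [Real.rpow_two] at h
  rw [gaussAbsMoment_eq_Ioi,
    integral_rpow_mul_exp_neg_mul_rpow two_pos (by linarith) (by norm_num), h]
  have e : (1 / (2 * β ^ 2)) ^ (-(q + 1) / 2) = (1 / 2) ^ (-(q + 1) / 2) * (β * β ^ q) := by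
    rw [show 1 / (2 * β ^ 2) = (1 / 2) * (β ^ (-2 : ℝ)) by
      rw [Real.rpow_neg hβ.le, Real.rpow_two]; field_simp]
    rw [Real.mul_rpow (by norm_num) (by positivity), ← Real.rpow_mul hβ.le]
    congr 1
    rw [show (-2 : ℝ) * (-(q + 1) / 2) = 1 + q by ring, Real.rpow_add hβ, Real.rpow_one]
  rw [e]
  field_simp

/-- With `ρ² = β²/(1 − a²)`, `π^{(δ)}` is a stationary density for `p^{(δ)}`:
for every `x' > 0`, `∫₀^∞ π^{(δ)}(x) p^{(δ)}(x,x') dx = π^{(δ)}(x')`. -/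
theorem radialOU_stationary_density (δ a β : ℝ) (hδ : 1 ≤ δ)
    (ha0 : 0 < a) (ha1 : a < 1) (hβ : 0 < β) (x' : ℝ) (hx' : 0 < x') :
    ∫ x in Set.Ioi (0 : ℝ),
        radialOUStationary δ (Real.sqrt (β ^ 2 / (1 - a ^ 2))) x
          * radialOUKernel δ a β x x'
      = radialOUStationary δ (Real.sqrt (β ^ 2 / (1 - a ^ 2))) x' := by
  have h1a : 0 < 1 - a ^ 2 := by nlinarith
  have hρ2 : Real.sqrt (β ^ 2 / (1 - a ^ 2)) ^ 2 = β ^ 2 / (1 - a ^ 2) :=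
    Real.sq_sqrt (by positivity)
  have hρ : 0 < Real.sqrt (β ^ 2 / (1 - a ^ 2)) := Real.sqrt_pos.2 (by positivity)
  generalize Real.sqrt (β ^ 2 / (1 - a ^ 2)) = ρ at hρ2 hρ
  have hs : 0 < Real.sqrt (2 * Real.pi) := by positivity
  have hC0 : 0 < gaussAbsMoment (δ - 1) := gaussAbsMoment_pos' (by linarith)
  have hq : ∀ k : ℕ, 0 ≤ δ - 1 + 2 * (k : ℝ) := fun k => by
    have : (0 : ℝ) ≤ k := k.cast_nonneg
    linarith
  have hC : ∀ k : ℕ, 0 < gaussAbsMoment (δ - 1 + 2 * (k : ℝ)) := fun k =>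
    gaussAbsMoment_pos' (hq k)
  have hsplit : ∀ (y : ℝ) (k : ℕ), 0 < y →
      y ^ (δ - 1 + 2 * (k : ℝ)) = y ^ (δ - 1) * (y ^ 2) ^ k := fun y k hy => by
    rw [Real.rpow_add hy, ← pow_mul, ← Real.rpow_natCast y (2 * k)]
    push_cast
    rfl
  have hexp : ∀ y : ℝ, Real.exp (-y ^ 2 / (2 * ρ ^ 2))
      = Real.exp (-y ^ 2 / (2 * β ^ 2)) * Real.exp (a ^ 2 * y ^ 2 / (2 * β ^ 2)) := fun y => by
    rw [← Real.exp_add, hρ2]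
    congr 1
    field_simp
    ring
  obtain ⟨A, hA⟩ : ∃ A, A = 2 / (ρ * Real.sqrt (2 * Real.pi)) / (ρ ^ (δ - 1) * gaussAbsMoment (δ - 1))
    * (2 / (β * Real.sqrt (2 * Real.pi)) * Real.exp (-x' ^ 2 / (2 * β ^ 2))) := ⟨_, rfl⟩
  have hApos : 0 < A := by rw [hA]; positivity
  let c : ℕ → ℝ := fun k => A * ((a ^ 2 / (2 * β ^ 2)) ^ k / Nat.factorial k
    * x' ^ (δ - 1 + 2 * (k : ℝ))
    / (gaussAbsMoment (δ - 1 + 2 * (k : ℝ)) * β ^ (δ - 1 + 2 * (k : ℝ))))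
  have hc : ∀ k, 0 ≤ c k := fun k => by
    have := hC k
    positivity
  let F : ℕ → ℝ → ℝ := fun k x =>
    c k * (x ^ (δ - 1 + 2 * (k : ℝ)) * Real.exp (-(1 / (2 * β ^ 2)) * x ^ 2))
  have hFint : ∀ k, Integrable (F k) (volume.restrict (Set.Ioi 0)) := fun k =>
    (integrableOn_rpow_mul_exp_neg_mul_sq (by positivity)
      (by linarith [hq k])).const_mul (c k)
  have hFval : ∀ k, ∫ x in Set.Ioi (0 : ℝ), F k x
      = A * (Real.sqrt (2 * Real.pi) / 2) * β * x' ^ (δ - 1)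
        * ((a ^ 2 * x' ^ 2 / (2 * β ^ 2)) ^ k / Nat.factorial k) := fun k => by
    simp only [F]
    rw [integral_const_mul, integral_Ioi_eq_moment (hq k) hβ]
    simp only [c]
    have h1 := (hC k).ne'
    have h2 : β ^ (δ - 1 + 2 * (k : ℝ)) ≠ 0 := (Real.rpow_pos_of_pos hβ _).ne'
    rw [hsplit x' k hx', show a ^ 2 * x' ^ 2 / (2 * β ^ 2) = (a ^ 2 / (2 * β ^ 2)) * x' ^ 2 by ring,
      mul_pow]
    generalize (a ^ 2 / (2 * β ^ 2)) ^ k = u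
    field_simp
  have hnorm : ∀ k, ∫ x in Set.Ioi (0 : ℝ), ‖F k x‖ = ∫ x in Set.Ioi (0 : ℝ), F k x := fun k => by
    refine setIntegral_congr_fun measurableSet_Ioi fun x hx => ?_
    have hx0 : (0 : ℝ) < x := hx
    refine Real.norm_of_nonneg ?_
    have := hc k
    positivity
  have hsum : HasSum (fun k : ℕ => (a ^ 2 * x' ^ 2 / (2 * β ^ 2)) ^ k / (Nat.factorial k : ℝ))
      (Real.exp (a ^ 2 * x' ^ 2 / (2 * β ^ 2))) := by
    rw [Real.exp_eq_exp_ℝ]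
    exact NormedSpace.expSeries_div_hasSum_exp _
  have hsum2 := hsum.mul_left (A * (Real.sqrt (2 * Real.pi) / 2) * β * x' ^ (δ - 1))
  have key := integral_tsum_of_summable_integral_norm hFint (by
    simp only [hnorm, hFval]; exact hsum2.summable)
  simp only [hFval] at key
  rw [hsum2.tsum_eq] at key
  have hint : ∫ x in Set.Ioi (0 : ℝ), radialOUStationary δ ρ x * radialOUKernel δ a β x x'
      = ∫ x in Set.Ioi (0 : ℝ), ∑' k, F k x := by
    refine setIntegral_congr_fun measurableSet_Ioi fun x hx => ?_
    have hx0 : (0 : ℝ) < x := hx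
    simp only [radialOUStationary, radialOUKernel, if_pos hx0, if_pos hx']
    rw [← mul_assoc, ← tsum_mul_left]
    refine tsum_congr fun k => ?_
    simp only [F, c]
    rw [hsplit x k hx0, hexp x, hA,
      show a ^ 2 * x ^ 2 / (2 * β ^ 2) = (a ^ 2 / (2 * β ^ 2)) * x ^ 2 by ring, mul_pow,
      show -(1 / (2 * β ^ 2)) * x ^ 2 = -x ^ 2 / (2 * β ^ 2) by ring,
      show -(a ^ 2 * x ^ 2) / (2 * β ^ 2) = -((a ^ 2 / (2 * β ^ 2)) * x ^ 2) by ring, Real.exp_neg]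
    have hE : Real.exp (a ^ 2 / (2 * β ^ 2) * x ^ 2) ≠ 0 := (Real.exp_pos _).ne'
    have h1 := (hC k).ne'
    have h2 : β ^ (δ - 1 + 2 * (k : ℝ)) ≠ 0 := (Real.rpow_pos_of_pos hβ _).ne'
    generalize Real.exp (a ^ 2 / (2 * β ^ 2) * x ^ 2) = E at *
    generalize (a ^ 2 / (2 * β ^ 2)) ^ k = u
    generalize Real.exp (-x ^ 2 / (2 * β ^ 2)) = v
    generalize Real.exp (-x' ^ 2 / (2 * β ^ 2)) = w
    generalize x' ^ (δ - 1 + 2 * (k : ℝ)) = z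
    have h3 : ρ ^ (δ - 1) ≠ 0 := (Real.rpow_pos_of_pos hρ _).ne'
    field_simp
  rw [hint, ← key, radialOUStationary, if_pos hx', hexp x', hA]
  have h3 : ρ ^ (δ - 1) ≠ 0 := (Real.rpow_pos_of_pos hρ _).ne'
  generalize Real.exp (-x' ^ 2 / (2 * β ^ 2)) = w
  generalize Real.exp (a ^ 2 * x' ^ 2 / (2 * β ^ 2)) = v
  field_simp
end
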